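/- Let p be a prime, let R be a commutative Noetherian local pro-p domain, and let a ∈ R with a ≠ 0. Then there exist a commutative ring S that is a Noetherian local integral domain, integrally closed in its fraction field, Hausdorff and complete with respect to the adic topology of its maximal ideal, with finite residue field of characteristic p, and with Krull dimension equal to that of R, together with an injective ring homomorphism φ : R → S and a natural number k such that the image of (maximalIdeal R)^k under φ is contained in the principal ideal of S generated by φ(a). -/

import Mathlib

/-- The data asserted to exist in Statement 3: a commutative Noetherian local pro-`p`
domain `S`, integrally closed in its fraction field, of the same Krull dimension as `R`,
together with an injective ring homomorphism `φ : R → S` and `k : ℕ` such that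
`φ((maximalIdeal R)^k) ⊆ φ(a)·S`. -/
structure EmbeddingIntoIntegrallyClosedProPDomain (p : ℕ) (R : Type) [CommRing R]
    [IsLocalRing R] (a : R) : Type 1 where
  S : Type
  [commRing : CommRing S]
  [isDomain : IsDomain S]
  [isNoetherianRing : IsNoetherianRing S]
  [isLocalRing : IsLocalRing S]
  [isAdicComplete : IsAdicComplete (IsLocalRing.maximalIdeal S) S]
  [finiteResidueField : Finite (IsLocalRing.ResidueField S)]
  [charPResidueField : CharP (IsLocalRing.ResidueField S) p]
  [isIntegrallyClosed : IsIntegrallyClosed S]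
  dim_eq : ringKrullDim S = ringKrullDim R
  φ : R →+* S
  injective : Function.Injective φ
  k : ℕ
  map_pow_le : Ideal.map φ (IsLocalRing.maximalIdeal R ^ k) ≤ Ideal.span {φ a}

/-! By Noether normalization `R` is finite over some `A = Λ⟦X₁, …, Xₙ⟧` with `Λ` the integers of a
local field, and `Frac R` is purely inseparable over a separable extension of `Frac A` generated by
a root of a monic polynomial `f` over `A`. Choose a specialization `ev : A → Λ` at which neither the
discriminant of `f` nor a nonzero multiple `d ∈ A` of `a` vanishes, and adjoin to `Λ` a root of the
specialized polynomial, obtaining `O ⊇ Λ` with uniformizer `q`. The homomorphism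
`A → O⟦X₁, …, Xₙ⟧`, `Xᵢ ↦ ev Xᵢ + q ^ N Xᵢ`, is injective, yet for large `N` so close to `ev` that
by Newton's method `f` still acquires a root, while the image of `d` still divides a power of `q`
and that of the maximal ideal lies in `(q)`. Composed with a power of Frobenius, it extends to `R`,
because the target is integrally closed. -/

open IsLocalRing

universe u

section AdicTopology

variable {A : Type*} [CommRing A]

theorem isHausdorff_self_iff {I : Ideal A} :
    IsHausdorff I A ↔ ∀ x, (∀ n, x ∈ I ^ n) → x = 0 := by
  simp only [isHausdorff_iff, SModEq.zero, smul_eq_mul, Ideal.mul_top]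

theorem isPrecomplete_self_iff {I : Ideal A} :
    IsPrecomplete I A ↔ ∀ f : ℕ → A, (∀ {m n}, m ≤ n → f m - f n ∈ I ^ m) →
      ∃ L, ∀ n, f n - L ∈ I ^ n := by
  simp only [isPrecomplete_iff, SModEq.sub_mem, smul_eq_mul, Ideal.mul_top]

end AdicTopology

section PowerSeriesAdic

open PowerSeries

variable {A : Type*} [CommRing A]

theorem coeff_mem_pow_of_mem_comap_constantCoeff_pow {I : Ideal A} {k : ℕ} {f : A⟦X⟧}
    (hf : f ∈ I.comap (constantCoeff (R := A)) ^ k) (i : ℕ) : coeff i f ∈ I ^ (k - i) := by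
  induction k generalizing f i with
  | zero => simp
  | succ k ih =>
    rw [pow_succ] at hf
    induction hf using Submodule.mul_induction_on' with
    | mem_mul_mem a ha b hb =>
      rw [coeff_mul]
      refine Ideal.sum_mem _ fun x hx => ?_
      have hx : x.1 + x.2 = i := Finset.HasAntidiagonal.mem_antidiagonal.1 hx
      have hbx : coeff x.2 b ∈ I ^ (1 - x.2) := by
        rcases Nat.eq_zero_or_pos x.2 with h | h
        · simpa [h] using hb
        · simp [Nat.sub_eq_zero_of_le h]
      refine Ideal.pow_le_pow_right (by omega) (?_ : _ ∈ I ^ ((k - x.1) + (1 - x.2)))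
      exact pow_add I _ _ ▸ Ideal.mul_mem_mul (ih ha x.1) hbx
    | add a _ b _ ha hb => exact map_add (coeff i) a b ▸ Ideal.add_mem _ ha hb

theorem mem_comap_constantCoeff_pow_of_coeff_mem {I : Ideal A} {k : ℕ} {f : A⟦X⟧}
    (hf : ∀ i, coeff i f ∈ I ^ (k - i)) : f ∈ I.comap (constantCoeff (R := A)) ^ k := by
  set J := I.comap (constantCoeff (R := A))
  have hX : (X : A⟦X⟧) ∈ J := by simp [J]
  have hC : I.map (C : A →+* A⟦X⟧) ≤ J :=
    Ideal.map_le_iff_le_comap.2 fun a ha => by simpa [J] using ha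
  rw [eq_X_pow_mul_shift_add_trunc k f, trunc_apply,
    ← Polynomial.coeToPowerSeries.ringHom_apply, map_sum]
  refine Ideal.add_mem _ (Ideal.mul_mem_right _ _ (Ideal.pow_mem_pow hX k))
    (Ideal.sum_mem _ fun i hi => ?_)
  have hi : i ≤ k := (Finset.mem_Ico.1 hi).2.le
  have hCi : C (coeff i f) ∈ J ^ (k - i) :=
    Ideal.pow_right_mono hC _ (Ideal.map_pow (C : A →+* A⟦X⟧) I _ ▸ Ideal.mem_map_of_mem _ (hf i))
  have := Ideal.mul_mem_mul hCi (Ideal.pow_mem_pow hX i)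
  rw [← pow_add, Nat.sub_add_cancel hi] at this
  simpa [← Polynomial.C_mul_X_pow_eq_monomial] using this

theorem mem_comap_constantCoeff_pow_iff {I : Ideal A} {k : ℕ} {f : A⟦X⟧} :
    f ∈ I.comap (constantCoeff (R := A)) ^ k ↔ ∀ i, coeff i f ∈ I ^ (k - i) :=
  ⟨coeff_mem_pow_of_mem_comap_constantCoeff_pow, mem_comap_constantCoeff_pow_of_coeff_mem⟩

theorem isAdicComplete_comap_constantCoeff (I : Ideal A) [IsAdicComplete I A] :
    IsAdicComplete (I.comap (constantCoeff (R := A))) A⟦X⟧ where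
  toIsHausdorff := isHausdorff_self_iff.2 fun f hf => by
    ext i
    refine isHausdorff_self_iff.1 (inferInstance : IsHausdorff I A) _ fun n => ?_
    simpa using mem_comap_constantCoeff_pow_iff.1 (hf (n + i)) i
  toIsPrecomplete := isPrecomplete_self_iff.2 fun f hf => by
    have hlim (i : ℕ) : ∃ L, ∀ n, coeff i (f (n + i)) - L ∈ I ^ n := by
      refine isPrecomplete_self_iff.1 inferInstance (fun n => coeff i (f (n + i)))
        fun {m n} hmn => ?_
      simpa using mem_comap_constantCoeff_pow_iff.1 (hf (Nat.add_le_add_right hmn i)) i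
    choose L hL using hlim
    refine ⟨PowerSeries.mk L, fun n => mem_comap_constantCoeff_pow_iff.2 fun i => ?_⟩
    have hstep := mem_comap_constantCoeff_pow_iff.1 (hf (Nat.le_add_right n i)) i
    have := Ideal.add_mem _ hstep (Ideal.pow_le_pow_right (Nat.sub_le n i) (hL i n))
    rwa [map_sub, sub_add_sub_cancel, ← coeff_mk i L, ← map_sub] at this

theorem comap_constantCoeff_maximalIdeal [IsLocalRing A] :
    (maximalIdeal A).comap (constantCoeff (R := A)) = maximalIdeal A⟦X⟧ := by
  ext f
  simp [mem_maximalIdeal, isUnit_iff_constantCoeff]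

theorem ringKrullDim_powerSeries_of_isLocalRing [IsLocalRing A] [IsNoetherianRing A] :
    ringKrullDim A⟦X⟧ = ringKrullDim A + 1 := by
  have hX : (X : A⟦X⟧) ∈ maximalIdeal A⟦X⟧ := by simp [← comap_constantCoeff_maximalIdeal]
  have hreg : (X : A⟦X⟧) ∈ nonZeroDivisors A⟦X⟧ := MvPowerSeries.X_mem_nonzeroDivisors
  have hsurj : Function.Surjective (constantCoeff (R := A)) := fun a => ⟨C a, by simp⟩
  have hker : Ideal.span {(X : A⟦X⟧)} = RingHom.ker (constantCoeff (R := A)) := by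
    ext g
    rw [Ideal.mem_span_singleton, X_dvd_iff, RingHom.mem_ker]
  rw [← ringKrullDim_quotient_span_singleton_succ_eq_ringKrullDim_of_mem_nonZeroDivisors
    hreg hX, hker, ringKrullDim_eq_of_ringEquiv (RingHom.quotientKerEquivOfSurjective hsurj)]

end PowerSeriesAdic

section PowerSeriesIntegrallyClosed

open PowerSeries

variable {A K : Type*} [CommRing A] [IsDomain A] [Field K] [Algebra A K]

theorem isAlmostIntegral_coeff_of_coeff_lt_eq_zero {q : K⟦X⟧} (hq : IsAlmostIntegral A⟦X⟧ q)
    {i : ℕ} (hi : ∀ j < i, coeff j q = 0) : IsAlmostIntegral A (coeff i q) := by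
  obtain ⟨h, hh, hmem⟩ := hq
  obtain ⟨q', rfl⟩ : X ^ i ∣ q := X_pow_dvd_iff.2 hi
  obtain ⟨h', hh'⟩ : X ^ h.order.toNat ∣ h := X_pow_order_dvd
  refine ⟨coeff h.order.toNat h, mem_nonZeroDivisors_of_ne_zero
    (coeff_order (nonZeroDivisors.ne_zero hh)), fun n => ?_⟩
  set m := h.order.toNat
  obtain ⟨r, hr⟩ := hmem n
  rw [hh', Algebra.smul_def, algebraMap_apply'', algebraMap_apply'', map_mul, map_pow, map_X,
    mul_pow, ← pow_mul, mul_mul_mul_comm, ← pow_add] at hr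
  have hmn := congrArg (coeff (m + i * n)) hr
  rw [coeff_map, coeff_X_pow_mul', if_pos le_rfl, Nat.sub_self] at hmn
  refine ⟨coeff (m + i * n) r, ?_⟩
  rw [hmn, hh', coeff_X_pow_mul', coeff_X_pow_mul', Algebra.smul_def]
  have hconst : constantCoeff (map (algebraMap A K) h') = algebraMap A K (constantCoeff h') := by
    simp only [← coeff_zero_eq_constantCoeff_apply, coeff_map]
  simp [hconst]

variable [IsFractionRing A K]

theorem mem_range_algebraMap_of_isAlmostIntegral [IsNoetherianRing A] [IsIntegrallyClosed A]
    {q : K⟦X⟧} (hq : IsAlmostIntegral A⟦X⟧ q) : q ∈ (algebraMap A⟦X⟧ K⟦X⟧).range := by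
  have hcoeff (i : ℕ) : coeff i q ∈ (algebraMap A K).range := by
    induction i using Nat.strong_induction_on with
    | _ i ih =>
      choose! c hc using ih
      have hlower (j : ℕ) (hj : j < i) :
          coeff j (q - algebraMap A⟦X⟧ K⟦X⟧ (PowerSeries.mk c)) = 0 := by
        simp [algebraMap_apply'', hc j hj]
      have hdiff : IsAlmostIntegral A⟦X⟧ (q - algebraMap A⟦X⟧ K⟦X⟧ (PowerSeries.mk c)) :=
        (completeIntegralClosure A⟦X⟧ K⟦X⟧).sub_mem hq (Subalgebra.algebraMap_mem _ _)
      obtain ⟨y, hy⟩ := IsIntegrallyClosed.isIntegral_iff.1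
        (isAlmostIntegral_coeff_of_coeff_lt_eq_zero hdiff hlower).isIntegral
      exact ⟨y + c i, by simp [hy, algebraMap_apply'']⟩
  choose c hc using hcoeff
  exact ⟨PowerSeries.mk c, by ext i; simp [algebraMap_apply'', hc]⟩

theorem isIntegrallyClosed_powerSeries (A : Type*) [CommRing A] [IsDomain A] [IsNoetherianRing A]
    [IsIntegrallyClosed A] : IsIntegrallyClosed A⟦X⟧ := by
  let K := FractionRing A
  let L := FractionRing K⟦X⟧
  have hinj : Function.Injective (algebraMap A⟦X⟧ K⟦X⟧) :=
    PowerSeries.map_injective _ (IsFractionRing.injective A K)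
  have : FaithfulSMul A⟦X⟧ K⟦X⟧ := (faithfulSMul_iff_algebraMap_injective _ _).2 hinj
  have : FaithfulSMul A⟦X⟧ L := .trans A⟦X⟧ K⟦X⟧ L
  let : Algebra (FractionRing A⟦X⟧) L := FractionRing.liftAlgebra A⟦X⟧ L
  have : IsScalarTower A⟦X⟧ (FractionRing A⟦X⟧) L := inferInstance
  rw [isIntegrallyClosed_iff (FractionRing A⟦X⟧)]
  intro y hy
  have hyL : IsIntegral A⟦X⟧ (algebraMap (FractionRing A⟦X⟧) L y) := hy.algebraMap
  obtain ⟨q, hq⟩ := IsIntegrallyClosed.isIntegral_iff.1 (hyL.tower_top (A := K⟦X⟧))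
  have hqint : IsIntegral A⟦X⟧ q := by
    rwa [← hq, isIntegral_algebraMap_iff (IsFractionRing.injective K⟦X⟧ L)] at hyL
  obtain ⟨f, g, hg, rfl⟩ := IsFractionRing.div_surjective (A := A⟦X⟧) y
  have hgf : g • q = algebraMap A⟦X⟧ K⟦X⟧ f := by
    apply IsFractionRing.injective K⟦X⟧ L
    have : algebraMap A⟦X⟧ L g ≠ 0 := by simpa using nonZeroDivisors.ne_zero hg
    rw [Algebra.smul_def, map_mul, hq, map_div₀]
    simp only [← IsScalarTower.algebraMap_apply]
    exact mul_div_cancel₀ _ this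
  obtain ⟨s, rfl⟩ := mem_range_algebraMap_of_isAlmostIntegral
    (hqint.isAlmostIntegral_of_exists_smul_mem_range ⟨g, hg, f, hgf.symm⟩)
  refine ⟨s, (algebraMap (FractionRing A⟦X⟧) L).injective ?_⟩
  rw [← hq]
  simp only [← IsScalarTower.algebraMap_apply]

end PowerSeriesIntegrallyClosed

section MvPowerSeriesRing

variable {Λ : Type*} [CommRing Λ]

theorem isAdicComplete_maximalIdeal_of_ringEquiv {A B : Type*} [CommRing A] [CommRing B]
    [IsLocalRing A] [IsLocalRing B] (e : A ≃+* B) [IsAdicComplete (maximalIdeal A) A] :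
    IsAdicComplete (maximalIdeal B) B := by
  rw [← map_ringEquiv_maximalIdeal e]
  exact (IsAdicComplete.congr_ringEquiv _ e).2 inferInstance

instance isAdicComplete_maximalIdeal_mvPowerSeries [IsLocalRing Λ]
    [IsAdicComplete (maximalIdeal Λ) Λ] (n : ℕ) :
    IsAdicComplete (maximalIdeal (MvPowerSeries (Fin n) Λ)) (MvPowerSeries (Fin n) Λ) := by
  induction n with
  | zero =>
    exact isAdicComplete_maximalIdeal_of_ringEquiv
      (MvPowerSeries.isEmptyEquiv (Fin 0) (R := Λ)).symm.toRingEquiv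
  | succ n ih =>
    have := isAdicComplete_comap_constantCoeff (maximalIdeal (MvPowerSeries (Fin n) Λ))
    rw [comap_constantCoeff_maximalIdeal] at this
    exact isAdicComplete_maximalIdeal_of_ringEquiv
      (MvPowerSeries.finSuccEquiv Λ n).symm.toRingEquiv

instance isDomain_mvPowerSeries {σ : Type*} [IsDomain Λ] : IsDomain (MvPowerSeries σ Λ) :=
  NoZeroDivisors.to_isDomain _

instance isIntegrallyClosed_mvPowerSeries [IsDomain Λ] [IsNoetherianRing Λ]
    [IsIntegrallyClosed Λ] (n : ℕ) : IsIntegrallyClosed (MvPowerSeries (Fin n) Λ) := by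
  induction n with
  | zero => exact .of_equiv (MvPowerSeries.isEmptyEquiv (Fin 0) (R := Λ)).symm.toRingEquiv
  | succ n ih =>
    have := isIntegrallyClosed_powerSeries (MvPowerSeries (Fin n) Λ)
    exact .of_equiv (MvPowerSeries.finSuccEquiv Λ n).symm.toRingEquiv

theorem ringKrullDim_mvPowerSeries_fin [IsLocalRing Λ] [IsNoetherianRing Λ] (n : ℕ) :
    ringKrullDim (MvPowerSeries (Fin n) Λ) = ringKrullDim Λ + n := by
  induction n with
  | zero =>
    simpa using ringKrullDim_eq_of_ringEquiv
      (MvPowerSeries.isEmptyEquiv (Fin 0) (R := Λ)).toRingEquiv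
  | succ n ih =>
    rw [ringKrullDim_eq_of_ringEquiv (MvPowerSeries.finSuccEquiv Λ n).toRingEquiv,
      ringKrullDim_powerSeries_of_isLocalRing, ih, Nat.cast_succ, add_assoc]

theorem finite_residueField_of_isLocalHom {A B : Type*} [CommRing A] [CommRing B] [IsLocalRing A]
    [IsLocalRing B] (f : A →+* B) [IsLocalHom f] [Finite (ResidueField B)] :
    Finite (ResidueField A) :=
  .of_injective _ (ResidueField.map f).injective

instance finite_residueField_mvPowerSeries {σ : Type*} [IsLocalRing Λ] [Finite (ResidueField Λ)] :
    Finite (ResidueField (MvPowerSeries σ Λ)) :=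
  have : IsLocalHom (MvPowerSeries.constantCoeff (σ := σ) (R := Λ)) :=
    ⟨fun _ => MvPowerSeries.isUnit_iff_constantCoeff.2⟩
  finite_residueField_of_isLocalHom MvPowerSeries.constantCoeff

end MvPowerSeriesRing

section Evaluation

variable {Λ R : Type*} [CommRing Λ] [CommRing R]

theorem exists_ringHom_mvPowerSeries {σ : Type*} [Finite σ] (l : Λ →+* R) (J : Ideal R)
    [IsAdicComplete J R] (r : σ → R) (hr : ∀ i, r i ∈ J) :
    ∃ ψ : MvPowerSeries σ Λ →+* R,
      (∀ a, ψ (MvPowerSeries.C a) = l a) ∧ ∀ i, ψ (MvPowerSeries.X i) = r i := by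
  let _ : UniformSpace Λ := ⊥
  have : DiscreteTopology Λ := ⟨rfl⟩
  let _ : WithIdeal R := ⟨J⟩
  obtain ⟨_, _⟩ := (IsAdic.isAdicComplete_iff (I := J) rfl).1 inferInstance
  have : IsLinearTopology R R := .mk_of_hasBasis R J.hasBasis_nhds_zero_adic
  have hl : Continuous l := continuous_of_discreteTopology
  have hr : MvPowerSeries.HasEval r :=
    ⟨fun i => WithIdeal.isTopologicallyNilpotent_of_mem (hr i), by simp [Filter.cofinite_eq_bot]⟩
  exact ⟨MvPowerSeries.eval₂Hom hl hr,
    fun a => by rw [MvPowerSeries.coe_eval₂Hom, MvPowerSeries.eval₂_C],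
    fun i => by rw [MvPowerSeries.coe_eval₂Hom, MvPowerSeries.eval₂_X]⟩

theorem powerSeries_ringHom_ext_of_isNilpotent {F G : PowerSeries Λ →+* R}
    (hC : ∀ a, F (.C a) = G (.C a)) (hX : F .X = G .X) (hnil : IsNilpotent (F .X)) : F = G := by
  have hpoly (P : Polynomial Λ) : F P = G P := by
    induction P using Polynomial.induction_on with
    | C a => simpa using hC a
    | add P Q hP hQ => simp [hP, hQ]
    | monomial k a _ => simp [hC, hX]
  obtain ⟨k, hk⟩ := hnil
  ext f
  rw [PowerSeries.eq_X_pow_mul_shift_add_trunc k f]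
  simp [hpoly, ← hX, hk]

theorem mvPowerSeries_ringHom_ext_of_isNilpotent {n : ℕ} {F G : MvPowerSeries (Fin n) Λ →+* R}
    (hC : ∀ a, F (.C a) = G (.C a)) (hX : ∀ i, F (.X i) = G (.X i))
    (hnil : ∀ i, IsNilpotent (F (.X i))) : F = G := by
  induction n with
  | zero =>
    ext f
    obtain ⟨a, rfl⟩ := (MvPowerSeries.isEmptyEquiv (Fin 0) (R := Λ)).symm.surjective f
    simpa using hC a
  | succ n ih =>
    let e := (MvPowerSeries.finSuccEquiv Λ n).symm.toRingEquiv
    have hC' (a : Λ) : e (.C (.C a)) = .C a := by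
      simp [e, AlgEquiv.symm_apply_eq]
    have hX' (i : Fin n) : e (.C (.X i)) = .X i.succ := by
      simp [e, AlgEquiv.symm_apply_eq]
    have hX0 : e .X = .X 0 := by simp [e, AlgEquiv.symm_apply_eq]
    suffices F.comp e.toRingHom = G.comp e.toRingHom by
      rwa [RingHom.cancel_right e.surjective] at this
    refine powerSeries_ringHom_ext_of_isNilpotent (fun a => ?_) (by simp [hX0, hX])
      (by simpa [hX0] using hnil 0)
    have := @ih (F := (F.comp e.toRingHom).comp PowerSeries.C)
      (G := (G.comp e.toRingHom).comp PowerSeries.C)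
      (by simp [hC', hC]) (by simp [hX', hX]) (by simp [hX', hnil])
    exact RingHom.congr_fun this a

theorem mvPowerSeries_ringHom_ext {n : ℕ} {F G : MvPowerSeries (Fin n) Λ →+* R} (J : Ideal R)
    [IsHausdorff J R] (hC : ∀ a, F (.C a) = G (.C a)) (hX : ∀ i, F (.X i) = G (.X i))
    (hJ : ∀ i, F (.X i) ∈ J) : F = G := by
  ext f
  refine sub_eq_zero.1 (isHausdorff_self_iff.1 (inferInstance : IsHausdorff J R) _ fun k => ?_)
  rw [← Ideal.Quotient.eq]
  exact RingHom.congr_fun (mvPowerSeries_ringHom_ext_of_isNilpotent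
    (F := (Ideal.Quotient.mk (J ^ k)).comp F) (G := (Ideal.Quotient.mk (J ^ k)).comp G)
    (by simp [hC]) (by simp [hX]) fun i => ⟨k, by
      rw [RingHom.comp_apply, ← map_pow, Ideal.Quotient.eq_zero_iff_mem]
      exact Ideal.pow_mem_pow (hJ i) k⟩) f

end Evaluation

section Specialization

variable {Λ : Type*} [CommRing Λ] [IsDomain Λ] [IsLocalRing Λ] [IsAdicComplete (maximalIdeal Λ) Λ]

open PowerSeries in
theorem exists_powerSeries_specialization (hΛ : maximalIdeal Λ ≠ ⊥) {D : Λ⟦X⟧} (hD : D ≠ 0) :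
    ∃ ev : Λ⟦X⟧ →+* Λ, (∀ a, ev (C a) = a) ∧ ev D ≠ 0 := by
  -- Write `D = X ^ m * (d + X * g)` with `d ≠ 0`. For `d ∉ maximalIdeal Λ ^ j`, the substitution
  -- `X ↦ c ^ j` cannot cancel `d`.
  obtain ⟨c, hc, hc0⟩ := Submodule.exists_mem_ne_zero_of_ne_bot hΛ
  set d := constantCoeff D.divXPowOrder
  have hd : d ≠ 0 := constantCoeff_divXPowOrder_eq_zero_iff.not.2 hD
  obtain ⟨j, hj⟩ : ∃ j, d ∉ maximalIdeal Λ ^ j := by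
    by_contra! hmem
    exact hd (isHausdorff_self_iff.1 (inferInstance : IsHausdorff (maximalIdeal Λ) Λ) _ hmem)
  have hj0 : j ≠ 0 := by rintro rfl; simp at hj
  obtain ⟨ev, hC, hX⟩ := exists_ringHom_mvPowerSeries (σ := Unit) (RingHom.id Λ) (maximalIdeal Λ)
    (fun _ => c ^ j) fun _ => Ideal.pow_mem_of_mem _ hc j (Nat.pos_of_ne_zero hj0)
  change ∀ a, ev (C a) = a at hC
  replace hX : ev X = c ^ j := hX ()
  refine ⟨ev, hC, fun h0 => ?_⟩
  rw [← X_pow_order_mul_divXPowOrder (f := D), map_mul, map_pow, hX,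
    sub_eq_iff_eq_add.1 (sub_const_eq_X_mul_shift D.divXPowOrder), map_add, map_mul, hX, hC] at h0
  have hsum := (mul_eq_zero.1 h0).resolve_left (pow_ne_zero _ (pow_ne_zero _ hc0))
  refine hj ?_
  rw [(eq_neg_of_add_eq_zero_right hsum : d = _)]
  exact neg_mem (Ideal.mul_mem_right _ _ (Ideal.pow_mem_pow hc j))

theorem exists_mvPowerSeries_specialization (hΛ : maximalIdeal Λ ≠ ⊥) {n : ℕ}
    {D : MvPowerSeries (Fin n) Λ} (hD : D ≠ 0) :
    ∃ ev : MvPowerSeries (Fin n) Λ →+* Λ, (∀ a, ev (.C a) = a) ∧ ev D ≠ 0 := by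
  induction n with
  | zero =>
    let e := MvPowerSeries.isEmptyEquiv (Fin 0) (R := Λ)
    exact ⟨e.toRingEquiv.toRingHom, fun a => e.commutes a, (map_ne_zero_iff _ e.injective).2 hD⟩
  | succ n ih =>
    let e := (MvPowerSeries.finSuccEquiv Λ n).toRingEquiv
    obtain ⟨i, hi⟩ : ∃ i, PowerSeries.coeff i (e D) ≠ 0 := by
      by_contra! hzero
      exact hD ((map_eq_zero_iff e e.injective).1 (PowerSeries.ext hzero))
    obtain ⟨ev₀, hC₀, hD₀⟩ := ih hi
    have hmap : PowerSeries.map ev₀ (e D) ≠ 0 := fun h => hD₀ (by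
      rw [← PowerSeries.coeff_map, h, map_zero])
    obtain ⟨ev₁, hC₁, hD₁⟩ := exists_powerSeries_specialization hΛ hmap
    exact ⟨ev₁.comp ((PowerSeries.map ev₀).comp e.toRingHom),
      fun a => by simp [e, hC₀, hC₁], by simpa using hD₁⟩

end Specialization

section Deformation

open MvPowerSeries

variable {Λ O : Type*} [CommRing Λ] [CommRing O] {n : ℕ}

theorem rescale_C {σ : Type*} (c : σ → O) (a : O) : rescale c (C a) = C a := by
  rw [← rescaleAlgHom_apply]
  exact (rescaleAlgHom c).commutes a

theorem rescale_X {σ : Type*} (c : σ → O) (i : σ) : rescale c (X i) = C (c i) * X i := by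
  classical
  ext d
  rw [coeff_rescale, coeff_C_mul, coeff_X]
  split_ifs with h <;> simp [h]

theorem rescale_const_injective {σ : Type*} [IsDomain O] {c : O} (hc : c ≠ 0) :
    Function.Injective (MvPowerSeries.rescale (σ := σ) fun _ => c) := by
  refine (injective_iff_map_eq_zero _).2 fun f hf => MvPowerSeries.ext fun d => ?_
  have hd := congrArg (MvPowerSeries.coeff d) hf
  rw [coeff_rescale, map_zero] at hd
  exact (mul_eq_zero.1 hd).resolve_left (Finset.prod_ne_zero_iff.2 fun i _ => pow_ne_zero _ hc)

theorem exists_shift_injective [IsLocalRing O] [IsAdicComplete (maximalIdeal O) O]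
    {r : Fin n → O} (hr : ∀ i, r i ∈ maximalIdeal O) :
    ∃ τ : MvPowerSeries (Fin n) O →+* MvPowerSeries (Fin n) O, Function.Injective τ ∧
      (∀ a, τ (C a) = C a) ∧ ∀ i, τ (X i) = X i + C (r i) := by
  have hmem (i) (s : O) (hs : s ∈ maximalIdeal O) :
      (X i + C s : MvPowerSeries (Fin n) O) ∈ maximalIdeal (MvPowerSeries (Fin n) O) := by
    simpa [mem_maximalIdeal, MvPowerSeries.isUnit_iff_constantCoeff] using hs
  obtain ⟨τ, hC, hX⟩ := exists_ringHom_mvPowerSeries C _ _ fun i => hmem i (r i) (hr i)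
  obtain ⟨τ', hC', hX'⟩ := exists_ringHom_mvPowerSeries C _ _
    fun i => hmem i (-r i) (neg_mem (hr i))
  have hinv : τ'.comp τ = RingHom.id _ :=
    mvPowerSeries_ringHom_ext (maximalIdeal _) (by simp [hC, hC']) (by simp [hX, hC', hX'])
      fun i => by simpa [hX, hX', hC'] using hmem i 0 (zero_mem _)
  exact ⟨τ, (Function.LeftInverse.injective (RingHom.congr_fun hinv)), hC, hX⟩

theorem map_section_mem_maximalIdeal {σ : Type*} [IsLocalRing Λ] {ev : MvPowerSeries σ Λ →+* Λ}
    (hev : ∀ a, ev (C a) = a) {g : MvPowerSeries σ Λ} (hg : constantCoeff g ∈ maximalIdeal Λ) :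
    ev g ∈ maximalIdeal Λ := by
  have hnonunit : ¬ IsUnit (g - C (ev g)) := fun hu => by simpa [hev] using hu.map ev
  rw [isUnit_iff_constantCoeff, ← mem_nonunits_iff, ← mem_maximalIdeal, map_sub,
    constantCoeff_C] at hnonunit
  exact (Submodule.sub_mem_iff_right _ hg).1 hnonunit

theorem exists_injective_deformation [IsLocalRing Λ] [IsDomain O] [IsLocalRing O]
    [IsAdicComplete (maximalIdeal O) O] {ι : Λ →+* O} (hι : Function.Injective ι)
    {ev : MvPowerSeries (Fin n) Λ →+* Λ} (hev : ∀ a, ev (C a) = a) {q : O} (hq0 : q ≠ 0)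
    (hq : q ∈ maximalIdeal O) (hιq : ∀ a ∈ maximalIdeal Λ, q ∣ ι a) (N : ℕ) :
    ∃ σ : MvPowerSeries (Fin n) Λ →+* MvPowerSeries (Fin n) O, Function.Injective σ ∧
      ∀ g, C q ^ N ∣ σ g - C (ι (ev g)) := by
  have hev_X (i : Fin n) : q ∣ ι (ev (X i)) :=
    hιq _ (map_section_mem_maximalIdeal hev (by simp))
  obtain ⟨τ, hτ, hτC, hτX⟩ := exists_shift_injective (r := fun i => ι (ev (X i)))
    fun i => Ideal.mem_of_dvd _ (hev_X i) hq
  have hmap : Function.Injective (map (σ := Fin n) ι) := fun f g h =>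
    MvPowerSeries.ext fun d => hι (by rw [← coeff_map, h, coeff_map])
  refine ⟨((rescale fun _ => q ^ N).comp τ).comp (map ι),
    ((rescale_const_injective (pow_ne_zero N hq0)).comp hτ).comp hmap, fun g => ?_⟩
  let J : Ideal (MvPowerSeries (Fin n) O) := Ideal.span {C q ^ N}
  have hqJ : Ideal.Quotient.mk J (C q ^ N) = 0 :=
    Ideal.Quotient.eq_zero_iff_mem.2 (Ideal.mem_span_singleton_self _)
  have hcongr : (Ideal.Quotient.mk J).comp (((rescale fun _ => q ^ N).comp τ).comp (map ι)) =
      (Ideal.Quotient.mk J).comp ((C.comp ι).comp ev) := by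
    refine mvPowerSeries_ringHom_ext_of_isNilpotent (fun a => ?_) (fun i => ?_) fun i => ⟨N, ?_⟩
    · simp [hτC, hev, rescale_C]
    · simp [hτX, rescale_C, rescale_X, hqJ]
    · obtain ⟨b, hb⟩ := hev_X i
      have hX : Ideal.Quotient.mk J (rescale (fun _ => q ^ N) (τ (map ι (X i)))) =
          Ideal.Quotient.mk J (C q * C b) := by
        simp [hτX, rescale_C, rescale_X, hqJ, hb]
      rw [RingHom.comp_apply, RingHom.comp_apply, RingHom.comp_apply, hX, ← map_pow, mul_pow,
        map_mul, hqJ, zero_mul]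
  rw [← Ideal.mem_span_singleton, ← Ideal.Quotient.eq]
  exact RingHom.congr_fun hcongr g

end Deformation

section AdicAlgebra

variable {A M : Type*} [CommRing A] [AddCommGroup M] [Module A M]

open AdicCompletion in
theorem isPrecomplete_of_finite (I : Ideal A) [IsPrecomplete I A] [Module.Finite A M] :
    IsPrecomplete I M := by
  refine of_surjective_iff.1 fun y => ?_
  obtain ⟨t, rfl⟩ := ofTensorProduct_surjective_of_finite I M y
  induction t with
  | zero => exact ⟨0, by simp⟩
  | add s t hs ht =>
    obtain ⟨x, hx⟩ := hs
    obtain ⟨z, hz⟩ := ht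
    exact ⟨x + z, by rw [map_add, map_add, hx, hz]⟩
  | tmul r x =>
    obtain ⟨a, rfl⟩ := of_surjective I A r
    refine ⟨a • x, ?_⟩
    rw [map_smul, ofTensorProduct_tmul, ← algebraMap_smul (AdicCompletion I A) a]
    rfl

theorem module_finite_of_finite_quotient (I : Ideal A) [IsPrecomplete I A] [IsHausdorff I M]
    [Module.Finite A (M ⧸ (I • ⊤ : Submodule A M))] : Module.Finite A M := by
  obtain ⟨n, f, hf⟩ := Module.Finite.exists_fin' A (M ⧸ (I • ⊤ : Submodule A M))
  obtain ⟨g, rfl⟩ := Module.projective_lifting_property _ f (Submodule.mkQ_surjective (I • ⊤))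
  have := isPrecomplete_of_finite (M := Fin n → A) I
  exact Module.Finite.of_surjective g (surjective_of_mkQ_comp_surjective hf)

theorem isAdicComplete_of_pow_le {I J : Ideal A} [IsAdicComplete I A] (hIJ : I ≤ J) {e : ℕ}
    (he : J ^ e ≤ I) : IsAdicComplete J A where
  toIsHausdorff := isHausdorff_self_iff.2 fun x hx =>
    isHausdorff_self_iff.1 (inferInstance : IsHausdorff I A) x fun n =>
      Ideal.pow_right_mono he n (pow_mul J e n ▸ hx (e * n))
  toIsPrecomplete := isPrecomplete_self_iff.2 fun f hf => by
    have he' : J ^ (e + 1) ≤ I := (Ideal.pow_le_pow_right e.le_succ).trans he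
    obtain ⟨L, hL⟩ := isPrecomplete_self_iff.1 (inferInstance : IsPrecomplete I A)
      (fun n => f ((e + 1) * n)) fun {m n} hmn =>
        Ideal.pow_right_mono he' m (pow_mul J (e + 1) m ▸ hf (Nat.mul_le_mul_left _ hmn))
    refine ⟨L, fun n => ?_⟩
    rw [← sub_add_sub_cancel _ (f ((e + 1) * n))]
    exact add_mem (hf (Nat.le_mul_of_pos_left n e.succ_pos)) (Ideal.pow_right_mono hIJ n (hL n))

end AdicAlgebra

section FiniteExtension

theorem isUnit_or_isNilpotent_of_isArtinianRing {B : Type*} [CommRing B] [IsArtinianRing B]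
    (hB : ∀ e : B, IsIdempotentElem e → e = 0 ∨ e = 1) (x : B) : IsUnit x ∨ IsNilpotent x := by
  obtain ⟨n, y, hy⟩ := IsArtinian.exists_pow_succ_smul_dvd x (1 : B)
  simp only [smul_eq_mul, mul_one, Nat.succ_eq_add_one] at hy
  have hstable (m : ℕ) : x ^ n * (x * y) ^ m = x ^ n := by
    induction m with
    | zero => simp
    | succ m ih => rw [pow_succ, ← mul_assoc, ih, ← mul_assoc, ← pow_succ, hy]
  have hidem : IsIdempotentElem ((x * y) ^ (n + 1)) := by
    rw [IsIdempotentElem]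
    linear_combination (x * y ^ (n + 1)) * hstable (n + 1)
  rcases hB _ hidem with h | h
  · exact .inr ⟨n, by rw [← hstable (n + 1), h, mul_zero]⟩
  · exact .inl (isUnit_of_mul_isUnit_left ((isUnit_pow_iff n.succ_ne_zero).1 (h ▸ isUnit_one)))

theorem isLocalRing_of_isArtinianRing {B : Type*} [CommRing B] [IsArtinianRing B] [Nontrivial B]
    (hB : ∀ e : B, IsIdempotentElem e → e = 0 ∨ e = 1) : IsLocalRing B := by
  have hnil {x : B} (hx : x ∈ nonunits B) : IsNilpotent x :=
    (isUnit_or_isNilpotent_of_isArtinianRing hB x).resolve_left hx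
  exact .of_nonunits_add fun a b ha hb =>
    ((Commute.all a b).isNilpotent_add (hnil ha) (hnil hb)).not_isUnit

variable {O : Type*} [CommRing O] [IsDomain O]

theorem eq_zero_or_eq_one_of_isIdempotentElem_quotient {I : Ideal O} [HenselianRing O I]
    {e : O ⧸ I} (he : IsIdempotentElem e) : e = 0 ∨ e = 1 := by
  obtain ⟨x, rfl⟩ := Ideal.Quotient.mk_surjective e
  have hunit : IsUnit (Ideal.Quotient.mk I (2 * x - 1)) := by
    refine IsUnit.of_mul_eq_one (Ideal.Quotient.mk I (2 * x - 1)) ?_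
    simp only [map_sub, map_mul, map_one, map_ofNat]
    linear_combination 4 * he.eq
  obtain ⟨a, ha, hax⟩ := HenselianRing.is_henselian (I := I) (Polynomial.X ^ 2 - Polynomial.X)
    ((Polynomial.monic_X_pow 2).sub_of_left (by simp)) x
    (by simpa [← Ideal.Quotient.eq_zero_iff_mem, sub_eq_zero, sq] using he.eq)
    (by simpa [one_add_one_eq_two] using hunit)
  have ha' : a * (a - 1) = 0 := by
    rw [← Polynomial.IsRoot.def.1 ha]
    simp only [Polynomial.eval_sub, Polynomial.eval_pow, Polynomial.eval_X]
    ring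
  rw [← Ideal.Quotient.eq.2 hax]
  rcases mul_eq_zero.1 ha' with h | h
  · exact .inl (by rw [h, map_zero])
  · exact .inr (by rw [sub_eq_zero.1 h, map_one])

theorem isLocalRing_of_henselianRing (I : Ideal O) [HenselianRing O I] [IsArtinianRing (O ⧸ I)] :
    IsLocalRing O := by
  have hjac : I ≤ Ideal.jacobson ⊥ := HenselianRing.jac
  have : Nontrivial (O ⧸ I) := Ideal.Quotient.nontrivial_iff.2 fun h =>
    Ideal.jacobson_eq_top_iff.not.2 bot_ne_top (top_le_iff.1 (h ▸ hjac))
  have : IsLocalRing (O ⧸ I) :=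
    isLocalRing_of_isArtinianRing fun _ => eq_zero_or_eq_one_of_isIdempotentElem_quotient
  have : IsLocalHom (Ideal.Quotient.mk I) := isLocalHom_of_le_jacobson_bot I hjac
  exact RingHom.domain_isLocalRing (Ideal.Quotient.mk I)

variable (A : Type*) [CommRing A] [IsLocalRing A] [Algebra A O]

theorem isAdicComplete_map_maximalIdeal [IsNoetherianRing A] [IsAdicComplete (maximalIdeal A) A]
    (O : Type*) [CommRing O] [Algebra A O] [Module.Finite A O] :
    IsAdicComplete ((maximalIdeal A).map (algebraMap A O)) O := by
  have := isPrecomplete_of_finite (M := O) (maximalIdeal A)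
  exact (IsAdicComplete.map_algebraMap_iff _ _).2 {}

theorem finite_quotient_map_maximalIdeal [Finite (ResidueField A)]
    (O : Type*) [CommRing O] [Algebra A O] [Module.Finite A O] :
    Finite (O ⧸ (maximalIdeal A).map (algebraMap A O)) := by
  have : Finite (A ⧸ maximalIdeal A) := ‹_›
  have : Module.Finite (A ⧸ maximalIdeal A) (O ⧸ (maximalIdeal A).map (algebraMap A O)) :=
    .of_restrictScalars_finite A _ _
  exact Module.finite_of_finite (A ⧸ maximalIdeal A)

theorem le_maximalIdeal_of_isAdicComplete {O : Type*} [CommRing O] [IsLocalRing O] (I : Ideal O)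
    [IsAdicComplete I O] : I ≤ maximalIdeal O :=
  (IsAdicComplete.le_jacobson_bot I).trans_eq (jacobson_eq_maximalIdeal ⊥ bot_ne_top)

variable [IsNoetherianRing A] [IsAdicComplete (maximalIdeal A) A] [Finite (ResidueField A)]

theorem isLocalRing_of_finite [Module.Finite A O] : IsLocalRing O := by
  have := isAdicComplete_map_maximalIdeal A O
  have := finite_quotient_map_maximalIdeal A O
  exact isLocalRing_of_henselianRing ((maximalIdeal A).map (algebraMap A O))

theorem isAdicComplete_maximalIdeal_of_finite (O : Type*) [CommRing O] [IsLocalRing O] [Algebra A O]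
    [Module.Finite A O] : IsAdicComplete (maximalIdeal O) O := by
  have := isAdicComplete_map_maximalIdeal A O
  have := finite_quotient_map_maximalIdeal A O
  obtain ⟨e, he⟩ := exists_maximalIdeal_pow_le_of_isArtinianRing_quotient
    ((maximalIdeal A).map (algebraMap A O))
  exact isAdicComplete_of_pow_le (le_maximalIdeal_of_isAdicComplete _) he

theorem finite_residueField_of_finite (O : Type*) [CommRing O] [IsLocalRing O] [Algebra A O]
    [Module.Finite A O] : Finite (ResidueField O) := by
  have := isAdicComplete_map_maximalIdeal A O
  have := finite_quotient_map_maximalIdeal A O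
  exact .of_surjective _ (Ideal.Quotient.factor_surjective
    (le_maximalIdeal_of_isAdicComplete ((maximalIdeal A).map (algebraMap A O))))

end FiniteExtension

section Newton

variable {B : Type*} [CommRing B]

theorem exists_fixedPoint_of_contraction (I : Ideal B) [IsAdicComplete I B] {T : B → B}
    (hmem : ∀ x ∈ I, T x ∈ I)
    (hT : ∀ n, ∀ x ∈ I, ∀ y ∈ I, x - y ∈ I ^ n → T x - T y ∈ I ^ (n + 1)) :
    ∃ z ∈ I, T z = z := by
  have hiter (n : ℕ) : T^[n] 0 ∈ I := by
    induction n with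
    | zero => exact zero_mem I
    | succ n ih => exact Function.iterate_succ_apply' T n 0 ▸ hmem _ ih
  have hstep (n : ℕ) : T^[n] 0 - T^[n + 1] 0 ∈ I ^ n := by
    induction n with
    | zero => simp
    | succ n ih =>
      rw [Function.iterate_succ_apply' T n, Function.iterate_succ_apply' T (n + 1)]
      exact hT n _ (hiter n) _ (hiter (n + 1)) ih
  obtain ⟨z, hz⟩ := isPrecomplete_self_iff.1 (inferInstance : IsPrecomplete I B) (fun n => T^[n] 0)
    fun {m n} hmn => by
      induction n, hmn using Nat.le_induction with
      | base => simp
      | succ n hmn ih =>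
        rw [← sub_add_sub_cancel _ (T^[n] 0)]
        exact add_mem ih (Ideal.pow_le_pow_right hmn (hstep n))
  have hzI : z ∈ I := by simpa using sub_mem (hiter 1) (by simpa using hz 1 : T^[1] 0 - z ∈ I)
  refine ⟨z, hzI, sub_eq_zero.1 (isHausdorff_self_iff.1 (inferInstance : IsHausdorff I B) _
    fun n => ?_)⟩
  have hn := sub_mem (hz (n + 1)) (hT n _ (hiter n) z hzI (hz n))
  rw [Function.iterate_succ_apply', sub_sub_sub_cancel_left] at hn
  exact Ideal.pow_le_pow_right n.le_succ hn

open Polynomial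

theorem exists_add_mul_add_sq_mul_eval_eq_zero (I : Ideal B) [IsAdicComplete I B] {w : B}
    (hw : w ∈ I) {u : B} (hu : IsUnit u) (h : B[X]) : ∃ z, w + u * z + z ^ 2 * h.eval z = 0 := by
  obtain ⟨v, hv⟩ := hu.exists_right_inv
  obtain ⟨z, -, hz⟩ := exists_fixedPoint_of_contraction I
    (T := fun z => -v * (w + z ^ 2 * h.eval z))
    (fun x hx => I.mul_mem_left _ (add_mem hw (I.mul_mem_right _ (I.pow_mem_of_mem hx 2 two_pos))))
    fun n x hx y hy hxy => by
      obtain ⟨c, hc⟩ := sub_dvd_eval_sub x y h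
      have hxyc : (x + y) * h.eval x + y ^ 2 * c ∈ I :=
        add_mem (I.mul_mem_right _ (add_mem hx hy))
          (I.mul_mem_right _ (I.pow_mem_of_mem hy 2 two_pos))
      convert (I ^ (n + 1)).mul_mem_left (-v) (pow_succ I n ▸ Ideal.mul_mem_mul hxy hxyc) using 1
      linear_combination (-v * y ^ 2) * hc
  exact ⟨z, by linear_combination (-u) * hz - (w + z ^ 2 * h.eval z) * hv⟩

theorem exists_isRoot_of_eval_eq_sq_mul (I : Ideal B) [IsAdicComplete I B] {f : B[X]}
    {α δ w u : B} (hw : w ∈ I) (hu : IsUnit u) (hf : f.eval α = δ ^ 2 * w)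
    (hf' : (derivative f).eval α = δ * u) : ∃ β, f.IsRoot β := by
  set g := taylor α f
  have hg := divX_mul_X_add g
  rw [← divX_mul_X_add g.divX, coeff_divX, zero_add, taylor_coeff_zero, taylor_coeff_one, hf, hf']
    at hg
  obtain ⟨z, hz⟩ := exists_add_mul_add_sq_mul_eval_eq_zero I hw hu
    (g.divX.divX.comp (C δ * X))
  refine ⟨δ * z + α, ?_⟩
  rw [IsRoot, ← taylor_eval]
  change g.eval (δ * z) = 0
  rw [← hg]
  simp only [eval_add, eval_mul, eval_C, eval_X, eval_comp] at hz ⊢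
  linear_combination δ ^ 2 * hz

theorem isUnit_one_add_mul_of_mem_jacobson {q : B} (hq : q ∈ Ideal.jacobson (⊥ : Ideal B)) (y : B) :
    IsUnit (1 + q * y) :=
  add_comm (q * y) 1 ▸ Ideal.mem_jacobson_bot.1 hq y

theorem dvd_pow_of_dvd_pow_of_pow_succ_dvd_sub {q : B} (hq : q ∈ Ideal.jacobson (⊥ : Ideal B))
    {b s : B} {e : ℕ} (hb : b ∣ q ^ e) (hs : q ^ (e + 1) ∣ s - b) : s ∣ q ^ e := by
  obtain ⟨z, hz⟩ := hb
  obtain ⟨y, hy⟩ := hs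
  refine (isUnit_one_add_mul_of_mem_jacobson hq (y * z)).dvd_mul_right.1 ⟨z, ?_⟩
  linear_combination hz - z * hy

theorem exists_isRoot_of_congr (I : Ideal B) [IsAdicComplete I B] {f g : B[X]} {q α : B} {e : ℕ}
    (hq : q ∈ I) (hg : g.IsRoot α) (hg' : (derivative g).eval α ∣ q ^ e)
    (hfg : C q ^ (2 * e + 1) ∣ f - g) : ∃ β, f.IsRoot β := by
  obtain ⟨w, hw⟩ := hg'
  obtain ⟨h, hh⟩ := hfg
  obtain rfl : f = g + C q ^ (2 * e + 1) * h := by rw [← hh]; ring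
  refine exists_isRoot_of_eval_eq_sq_mul I (α := α) (δ := (derivative g).eval α)
    (w := q * (w ^ 2 * h.eval α)) (u := 1 + q * (w * q ^ e * (derivative h).eval α))
    (I.mul_mem_right _ hq)
    (isUnit_one_add_mul_of_mem_jacobson (IsAdicComplete.le_jacobson_bot I hq) _) ?_ ?_
  · simp only [eval_add, eval_mul, eval_pow, eval_C, IsRoot.def.1 hg]
    linear_combination q * h.eval α * (q ^ e + (derivative g).eval α * w) * hw
  · simp only [← C_pow, derivative_add, derivative_C_mul, eval_add, eval_mul, eval_C]
    linear_combination q ^ (e + 1) * (derivative h).eval α * hw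

end Newton

section LocalFields

open Polynomial

/-- A complete discrete valuation ring with finite residue field, that is, the ring of integers
of a nonarchimedean local field of either characteristic. These are the coefficient rings of the
power series rings below. -/
class IsLocalFieldIntegerRing (Λ : Type*) [CommRing Λ] : Prop extends
    IsDomain Λ, IsDiscreteValuationRing Λ where
  isAdicComplete : IsAdicComplete (maximalIdeal Λ) Λ
  finite_residueField : Finite (ResidueField Λ)

attribute [instance] IsLocalFieldIntegerRing.isAdicComplete
  IsLocalFieldIntegerRing.finite_residueField

theorem isLocalFieldIntegerRing_integralClosure (Λ : Type*) [CommRing Λ]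
    [IsLocalFieldIntegerRing Λ] (L : Type*) [Field L] [Algebra Λ L] [Algebra (FractionRing Λ) L]
    [IsScalarTower Λ (FractionRing Λ) L] [FiniteDimensional (FractionRing Λ) L]
    [Algebra.IsSeparable (FractionRing Λ) L] :
    IsLocalFieldIntegerRing (integralClosure Λ L) := by
  have : FaithfulSMul Λ L := .trans Λ (FractionRing Λ) L
  set O := integralClosure Λ L
  have : Module.Finite Λ O := IsIntegralClosure.finite Λ (FractionRing Λ) L O
  have : IsDedekindDomain O := integralClosure.isDedekindDomain Λ (FractionRing Λ) L
  have : IsLocalRing O := isLocalRing_of_finite Λ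
  have not_isField : ¬ IsField O := fun h =>
    IsDiscreteValuationRing.not_isField Λ
      (isField_of_isIntegral_of_isField (FaithfulSMul.algebraMap_injective Λ O) h)
  have : IsDiscreteValuationRing O :=
    ((IsDiscreteValuationRing.TFAE O not_isField).out 0 2).2 ‹IsDedekindDomain O›
  exact { isAdicComplete := isAdicComplete_maximalIdeal_of_finite Λ O
          finite_residueField := finite_residueField_of_finite Λ O }

theorem exists_isLocalFieldIntegerRing_isRoot {Λ : Type u} [CommRing Λ] [IsLocalFieldIntegerRing Λ]
    {f : Λ[X]} (hf : f.Monic) (hdeg : f.natDegree ≠ 0)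
    (hsep : (f.map (algebraMap Λ (FractionRing Λ))).Separable) :
    ∃ (O : Type u) (_ : CommRing O) (_ : IsLocalFieldIntegerRing O) (ι : Λ →+* O) (α : O),
      Function.Injective ι ∧ IsLocalHom ι ∧ (f.map ι).IsRoot α := by
  set fK := f.map (algebraMap Λ (FractionRing Λ))
  let L := fK.SplittingField
  have : Algebra.IsSeparable (FractionRing Λ) L :=
    have := IsGalois.of_separable_splitting_field (E := L) hsep
    inferInstance
  have : FaithfulSMul Λ L := .trans Λ (FractionRing Λ) L
  obtain ⟨x, hx⟩ := (SplittingField.splits fK).exists_eval_eq_zero (by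
    rw [degree_map, hf.degree_map]
    exact fun h => hdeg (natDegree_eq_of_degree_eq_some h))
  have root : aeval x f = 0 := by
    rwa [← aeval_map_algebraMap (FractionRing Λ), ← eval_map_algebraMap]
  let α : integralClosure Λ L := ⟨x, f, hf, root⟩
  refine ⟨integralClosure Λ L, inferInstance, isLocalFieldIntegerRing_integralClosure Λ L,
    algebraMap Λ _, α, FaithfulSMul.algebraMap_injective Λ _, inferInstance, ?_⟩
  rw [IsRoot.def, eval_map_algebraMap]
  exact Subtype.val_injective ((aeval_algebraMap_apply L α f).symm.trans root)

end LocalFields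

section Discriminant

open Polynomial

variable {A : Type*} [CommRing A]

theorem exists_mul_add_derivative_mul_eq_C [IsDomain A] {f : A[X]} (hdeg : f.natDegree ≠ 0)
    (hsep : (f.map (algebraMap A (FractionRing A))).Separable) :
    ∃ (D : A) (u v : A[X]), D ≠ 0 ∧ f * u + derivative f * v = C D := by
  obtain ⟨u, v, -, -, h⟩ :=
    exists_mul_add_mul_eq_C_resultant f (derivative f) le_rfl le_rfl (.inl hdeg)
  have hinj := FaithfulSMul.algebraMap_injective A (FractionRing A)
  refine ⟨_, u, v, fun h0 => resultant_ne_zero _ _ hsep ?_, h⟩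
  rw [derivative_map, natDegree_map_eq_of_injective hinj, natDegree_map_eq_of_injective hinj,
    resultant_map_map, h0, map_zero]

theorem separable_map_of_mul_add_derivative_mul_eq_C {K : Type*} [Field K] {f u v : A[X]} {D : A}
    (h : f * u + derivative f * v = C D) (ρ : A →+* K) (hD : ρ D ≠ 0) : (f.map ρ).Separable := by
  have hC : C (ρ D)⁻¹ * C (ρ D) = 1 := by rw [← C_mul, inv_mul_cancel₀ hD, C_1]
  have hρ := congrArg (Polynomial.map ρ) h
  rw [Polynomial.map_add, Polynomial.map_mul, Polynomial.map_mul, map_C, ← derivative_map] at hρ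
  exact ⟨C (ρ D)⁻¹ * u.map ρ, C (ρ D)⁻¹ * v.map ρ, by linear_combination C (ρ D)⁻¹ * hρ + hC⟩

theorem eval_derivative_map_dvd_of_isRoot {B : Type*} [CommRing B] {f u v : A[X]} {D : A}
    (h : f * u + derivative f * v = C D) (ρ : A →+* B) {α : B} (hα : (f.map ρ).IsRoot α) :
    (derivative (f.map ρ)).eval α ∣ ρ D := by
  have hρ := congrArg (fun g => (g.map ρ).eval α) h
  simp only [Polynomial.map_add, Polynomial.map_mul, map_C, eval_add, eval_mul, eval_C,
    IsRoot.def.1 hα, zero_mul, zero_add, ← derivative_map] at hρ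
  exact Dvd.intro _ hρ

theorem C_pow_dvd_map_sub_map {B : Type*} [CommRing B] {σ ρ : A →+* B} {q : B} {N : ℕ}
    (h : ∀ x, q ^ N ∣ σ x - ρ x) (f : A[X]) : C q ^ N ∣ f.map σ - f.map ρ := by
  rw [← C_pow, C_dvd_iff_dvd_coeff]
  intro i
  rw [coeff_sub, coeff_map, coeff_map]
  exact h _

end Discriminant

section RootAfterDeformation

open Polynomial

variable {Λ : Type u} [CommRing Λ] {n : ℕ}

theorem exists_separable_specialization [IsDomain Λ] [IsLocalRing Λ]
    [IsAdicComplete (maximalIdeal Λ) Λ] (hΛ : maximalIdeal Λ ≠ ⊥)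
    {f : (MvPowerSeries (Fin n) Λ)[X]} (hdeg : f.natDegree ≠ 0)
    (hsep : (f.map (algebraMap _ (FractionRing (MvPowerSeries (Fin n) Λ)))).Separable)
    {d : MvPowerSeries (Fin n) Λ} (hd : d ≠ 0) :
    ∃ ev : MvPowerSeries (Fin n) Λ →+* Λ, (∀ a, ev (.C a) = a) ∧ ev d ≠ 0 ∧
      ((f.map ev).map (algebraMap Λ (FractionRing Λ))).Separable := by
  obtain ⟨D, u, v, hD, bezout⟩ := exists_mul_add_derivative_mul_eq_C hdeg hsep
  obtain ⟨ev, hevC, hev⟩ := exists_mvPowerSeries_specialization hΛ (mul_ne_zero hD hd)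
  rw [map_mul] at hev
  refine ⟨ev, hevC, right_ne_zero_of_mul hev, ?_⟩
  rw [Polynomial.map_map]
  exact separable_map_of_mul_add_derivative_mul_eq_C bezout _ <|
    (map_ne_zero_iff _ (FaithfulSMul.algebraMap_injective _ _)).2 (left_ne_zero_of_mul hev)

theorem exists_injective_isRoot_map [IsLocalFieldIntegerRing Λ]
    {f : (MvPowerSeries (Fin n) Λ)[X]} (hf : f.Monic) (hdeg : f.natDegree ≠ 0)
    (hsep : (f.map (algebraMap _ (FractionRing (MvPowerSeries (Fin n) Λ)))).Separable)
    {d : MvPowerSeries (Fin n) Λ} (hd : d ≠ 0) :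
    ∃ (O : Type u) (_ : CommRing O) (_ : IsLocalFieldIntegerRing O)
      (σ : MvPowerSeries (Fin n) Λ →+* MvPowerSeries (Fin n) O) (q : MvPowerSeries (Fin n) O)
      (e : ℕ), Function.Injective σ ∧ (∃ β, (f.map σ).IsRoot β) ∧
        (∀ x ∈ maximalIdeal (MvPowerSeries (Fin n) Λ), q ∣ σ x) ∧ σ d ∣ q ^ e := by
  obtain ⟨ev, hevC, hev, hsep_ev⟩ := exists_separable_specialization
    (IsDiscreteValuationRing.not_a_field Λ) hdeg hsep hd
  replace hdeg : (f.map ev).natDegree ≠ 0 := by rwa [hf.natDegree_map]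
  obtain ⟨D, u, v, hD, bezout⟩ := exists_mul_add_derivative_mul_eq_C hdeg hsep_ev
  obtain ⟨ϖ, hϖ⟩ := IsDiscreteValuationRing.exists_irreducible Λ
  obtain ⟨e, he⟩ := IsDiscreteValuationRing.associated_pow_irreducible (mul_ne_zero hD hev) hϖ
  obtain ⟨O, _, _, ι, α, hι, _, hα⟩ :=
    exists_isLocalFieldIntegerRing_isRoot (hf.map ev) hdeg hsep_ev
  have mem_iff (a : Λ) : a ∈ maximalIdeal Λ ↔ ϖ ∣ a := by
    rw [hϖ.maximalIdeal_eq, Ideal.mem_span_singleton]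
  have hιϖ : ι ϖ ∈ maximalIdeal O := fun h => hϖ.not_isUnit (isUnit_of_map_unit ι ϖ h)
  obtain ⟨σ, hσ, hσκ⟩ := exists_injective_deformation hι hevC ((map_ne_zero_iff ι hι).2 hϖ.ne_zero)
    hιϖ (fun a ha => map_dvd ι ((mem_iff a).1 ha)) (2 * e + 1)
  let κ : Λ →+* MvPowerSeries (Fin n) O := MvPowerSeries.C.comp ι
  have hκϖ : κ ϖ ∈ maximalIdeal (MvPowerSeries (Fin n) O) := by
    simpa [κ, mem_maximalIdeal, MvPowerSeries.isUnit_iff_constantCoeff] using hιϖ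
  have map_dvd_pow {x : Λ} (hx : x ∣ D * ev d) : κ x ∣ κ ϖ ^ e :=
    map_pow κ ϖ e ▸ map_dvd κ (hx.trans he.dvd)
  refine ⟨O, inferInstance, inferInstance, σ, κ ϖ, e, hσ, ?_, fun x hx => ?_, ?_⟩
  · have root : ((f.map ev).map κ).IsRoot (MvPowerSeries.C α) := by
      rw [← Polynomial.map_map]
      exact hα.map
    refine exists_isRoot_of_congr _ hκϖ root
      ((eval_derivative_map_dvd_of_isRoot bezout κ root).trans (map_dvd_pow (dvd_mul_right _ _))) ?_
    rw [Polynomial.map_map]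
    exact C_pow_dvd_map_sub_map hσκ f
  · have ev_mem : ev x ∈ maximalIdeal Λ := map_section_mem_maximalIdeal hevC <| by
      simpa [mem_maximalIdeal, MvPowerSeries.isUnit_iff_constantCoeff] using hx
    exact (dvd_sub_left (map_dvd κ ((mem_iff _).1 ev_mem))).1
      ((dvd_pow_self _ (by lia)).trans (hσκ x))
  · exact dvd_pow_of_dvd_pow_of_pow_succ_dvd_sub (IsAdicComplete.le_jacobson_bot _ hκϖ)
      (map_dvd_pow (dvd_mul_left _ _)) ((pow_dvd_pow _ (by lia)).trans (hσκ d))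

end RootAfterDeformation

section CoefficientRings

variable {R : Type*} [CommRing R]

instance isLocalFieldIntegerRing_padicInt (p : ℕ) [Fact p.Prime] :
    IsLocalFieldIntegerRing ℤ_[p] where
  isAdicComplete := inferInstance
  finite_residueField := .of_equiv _ PadicInt.residueField.symm.toEquiv

instance isLocalFieldIntegerRing_powerSeries (k : Type*) [Field k] [Finite k] :
    IsLocalFieldIntegerRing (PowerSeries k) where
  isAdicComplete := by
    rw [← comap_constantCoeff_maximalIdeal]
    exact isAdicComplete_comap_constantCoeff _
  finite_residueField := .of_equiv _ PowerSeries.residueFieldOfPowerSeries.symm.toEquiv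

theorem exists_ringHom_padicInt (p : ℕ) [Fact p.Prime] (I : Ideal R) [IsAdicComplete I R]
    (hp : (p : R) ∈ I) : Nonempty (ℤ_[p] →+* R) := by
  have cast_pow_eq_zero (n : ℕ) : ((p ^ n : ℕ) : R ⧸ I ^ n) = 0 := by
    simpa using Ideal.Quotient.eq_zero_iff_mem.2 (Ideal.pow_mem_pow hp n)
  let f (n : ℕ) : ZMod (p ^ n) →+* R ⧸ I ^ n :=
    ZMod.castHom (ringChar.dvd (cast_pow_eq_zero n)) _
  refine ⟨IsAdicComplete.liftRingHom I (fun n => (f n).comp (PadicInt.toZModPow n)) ?_⟩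
  intro m n hmn
  rw [← PadicInt.zmod_cast_comp_toZModPow m n hmn, ← RingHom.comp_assoc, ← RingHom.comp_assoc]
  congr 1
  exact RingHom.ext_zmod _ _

theorem exists_isLocalFieldIntegerRing_ringHom (p : ℕ) [Fact p.Prime] [IsLocalRing R]
    [IsAdicComplete (maximalIdeal R) R] [CharP (ResidueField R) p] (hR : maximalIdeal R ≠ ⊥) :
    ∃ (Λ : Type) (_ : CommRing Λ) (_ : IsLocalFieldIntegerRing Λ) (l : Λ →+* R),
      ∃ ϖ ∈ maximalIdeal Λ, l ϖ ≠ 0 := by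
  have hpm : (p : R) ∈ maximalIdeal R := by
    rw [← residue_eq_zero_iff, map_natCast, CharP.cast_eq_zero]
  by_cases hp : (p : R) = 0
  · have : CharP R p := (CharP.charP_iff_prime_eq_zero Fact.out).2 hp
    obtain ⟨t, ht, ht0⟩ := Submodule.exists_mem_ne_zero_of_ne_bot hR
    obtain ⟨l, -, hl⟩ := exists_ringHom_mvPowerSeries (σ := Unit)
      (ZMod.castHom dvd_rfl R : ZMod p →+* R) (maximalIdeal R) (fun _ => t) fun _ => ht
    exact ⟨PowerSeries (ZMod p), inferInstance, inferInstance, l, PowerSeries.X,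
      PowerSeries.X_prime.not_isUnit, ht0 ∘ (hl ()).symm.trans⟩
  · obtain ⟨l⟩ := exists_ringHom_padicInt p (maximalIdeal R) hpm
    exact ⟨ℤ_[p], inferInstance, inferInstance, l, p, PadicInt.p_nonunit, by rwa [map_natCast]⟩

end CoefficientRings

section Parameters

variable (R : Type*) [CommRing R] [IsNoetherianRing R] [IsLocalRing R]

theorem exists_parameters : ∃ (n : ℕ) (r : Fin n → R), ringKrullDim R = n ∧
    (∀ i, r i ∈ maximalIdeal R) ∧ ∃ j, maximalIdeal R ^ j ≤ Ideal.span (Set.range r) := by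
  obtain ⟨s, hs, hcard⟩ := Ideal.exists_finset_card_eq_height_of_isNoetherianRing (maximalIdeal R)
  have := quotient_artinian_of_mem_minimalPrimes_of_isLocalRing _ hs
  let e := s.equivFin.symm
  have range_eq : Set.range (fun i => (e i : R)) = s := by
    rw [Set.range_comp' Subtype.val e, e.range_eq_univ, Set.image_univ, Subtype.range_coe]
  refine ⟨s.card, fun i => e i, ?_, fun i => hs.1.2 (Ideal.subset_span (e i).2), ?_⟩
  · rw [← maximalIdeal_height_eq_ringKrullDim, ← hcard]
    rfl
  · rw [range_eq]
    exact exists_maximalIdeal_pow_le_of_isArtinianRing_quotient _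

variable {R}

theorem exists_parameters_insert {t : R} (ht : t ∈ nonZeroDivisors R) (htm : t ∈ maximalIdeal R) :
    ∃ (n : ℕ) (r : Fin n → R), ringKrullDim R = n + 1 ∧ (∀ i, r i ∈ maximalIdeal R) ∧
      ∃ j, maximalIdeal R ^ j ≤ Ideal.span (insert t (Set.range r)) := by
  let π := Ideal.Quotient.mk (Ideal.span {t})
  have hπ : Function.Surjective π := Ideal.Quotient.mk_surjective
  have : Nontrivial (R ⧸ Ideal.span {t}) :=
    Ideal.Quotient.nontrivial_iff.2 (by rwa [Ne, Ideal.span_singleton_eq_top])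
  have : IsLocalRing (R ⧸ Ideal.span {t}) := .of_surjective' π hπ
  have : IsLocalHom π := .of_surjective π hπ
  obtain ⟨n, r, hdim, hr, j, hj⟩ := exists_parameters (R ⧸ Ideal.span {t})
  obtain ⟨r, rfl⟩ := hπ.comp_left r
  refine ⟨n, r, ?_, fun i => (map_mem_nonunits_iff π _).1 (hr i), j, ?_⟩
  · rw [← hdim, ringKrullDim_quotient_span_singleton_succ_eq_ringKrullDim_of_mem_nonZeroDivisors
      ht htm]
  · rw [Set.range_comp, ← Ideal.map_span] at hj
    have := (Ideal.pow_right_mono (((local_hom_TFAE π).out 0 2).1 ‹_›) j).trans hj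
    rw [← Ideal.map_pow, Ideal.map_le_iff_le_comap, Ideal.comap_map_of_surjective' _ hπ,
      Ideal.mk_ker] at this
    rwa [Ideal.span_insert, sup_comm]

end Parameters

section NoetherNormalization

variable {A R : Type*} [CommRing A] [CommRing R]

theorem isLocalHom_of_finite_residueField [IsLocalRing A] [IsLocalRing R] [Finite (ResidueField R)]
    (ψ : A →+* R) : IsLocalHom ψ := by
  let f := (residue R).comp ψ
  have : Finite (A ⧸ RingHom.ker f) := .of_injective _ (RingHom.kerLift_injective f)
  have : (RingHom.ker f).IsPrime := RingHom.ker_isPrime f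
  have ker_eq := eq_maximalIdeal (Ideal.Quotient.maximal_of_isField _ (Finite.isField_of_domain _) :
    (RingHom.ker f).IsMaximal)
  refine ((local_hom_TFAE ψ).out 0 4).2 ?_
  rw [← ker_eq, ← ker_residue, RingHom.comap_ker]

variable [Algebra A R]

theorem module_finite_of_maximalIdeal_pow_le [IsLocalRing A] [IsAdicComplete (maximalIdeal A) A]
    [IsDomain R] [IsNoetherianRing R] [IsLocalRing R] [Finite (ResidueField R)] {j : ℕ}
    (hj : maximalIdeal R ^ j ≤ (maximalIdeal A).map (algebraMap A R)) : Module.Finite A R := by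
  have : IsLocalHom (algebraMap A R) := isLocalHom_of_finite_residueField _
  have hne : (maximalIdeal A).map (algebraMap A R) ≠ ⊤ := fun h =>
    (maximalIdeal.isMaximal R).ne_top <|
      top_le_iff.1 (h ▸ ((local_hom_TFAE (algebraMap A R)).out 0 2).1 ‹_›)
  have : IsHausdorff (maximalIdeal A) R :=
    IsHausdorff.map_algebraMap_iff.1 (IsHausdorff.of_isDomain _ hne)
  have : Finite (R ⧸ (maximalIdeal A • ⊤ : Submodule A R)) := by
    have := finite_quotient_iff.2 ⟨j, hj⟩
    rw [Ideal.smul_top_eq_map]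
    exact .of_equiv _ (Submodule.Quotient.restrictScalarsEquiv A _).symm.toEquiv
  exact module_finite_of_finite_quotient (maximalIdeal A)

variable [Algebra.IsIntegral A R]

variable (A R) in
theorem ringKrullDim_le_of_isIntegral : ringKrullDim R ≤ ringKrullDim A :=
  Order.krullDim_le_of_strictMono (PrimeSpectrum.comap (algebraMap A R)) fun P Q hPQ =>
    have ⟨hle, x, hxQ, hxP⟩ := SetLike.lt_iff_le_and_exists.1 (show P.asIdeal < Q.asIdeal from hPQ)
    Ideal.comap_lt_comap_of_integral_mem_sdiff hle ⟨hxQ, hxP⟩ (Algebra.IsIntegral.isIntegral x)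

theorem faithfulSMul_of_isIntegral_of_ringKrullDim_eq [IsDomain A]
    [FiniteRingKrullDim R] (h : ringKrullDim A = ringKrullDim R) : FaithfulSMul A R := by
  rw [faithfulSMul_iff_algebraMap_injective, injective_iff_map_eq_zero]
  intro a ha
  by_contra ha0
  have : Algebra.IsIntegral (⊥ : Subalgebra A R) R := .tower_top A
  have hdim := ringKrullDim_succ_le_of_surjective (algebraMap A (⊥ : Subalgebra A R))
    (fun ⟨_, hx⟩ => (Algebra.mem_bot.1 hx).imp fun _ => Subtype.ext)
    (mem_nonZeroDivisors_of_ne_zero ha0) (Subtype.ext ha)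
  have succ_le : ringKrullDim R + 1 ≤ ringKrullDim R :=
    (add_le_add_left (ringKrullDim_le_of_isIntegral (⊥ : Subalgebra A R) R) 1).trans (h ▸ hdim)
  obtain ⟨d, hd⟩ := WithBot.ne_bot_iff_exists.1 (ringKrullDim_ne_bot (R := R))
  lift d to ℕ using by rintro rfl; exact ringKrullDim_ne_top hd.symm
  rw [← hd] at succ_le
  have : d + 1 ≤ d := by exact_mod_cast succ_le
  exact d.lt_irrefl this

theorem exists_mvPowerSeries_ringHom_finite (p : ℕ) [Fact p.Prime] [IsDomain R]
    [IsNoetherianRing R] [IsLocalRing R] [IsAdicComplete (maximalIdeal R) R]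
    [Finite (ResidueField R)] [CharP (ResidueField R) p] (hR : maximalIdeal R ≠ ⊥) :
    ∃ (Λ : Type) (_ : CommRing Λ) (_ : IsLocalFieldIntegerRing Λ) (n : ℕ)
      (ψ : MvPowerSeries (Fin n) Λ →+* R),
      Function.Injective ψ ∧ ψ.Finite ∧ ringKrullDim R = n + 1 := by
  obtain ⟨Λ, _, _, l, ϖ, hϖ, hlϖ⟩ := exists_isLocalFieldIntegerRing_ringHom p hR
  have := isLocalHom_of_finite_residueField l
  obtain ⟨n, r, hdim, hr, j, hj⟩ := exists_parameters_insert (mem_nonZeroDivisors_of_ne_zero hlϖ)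
    ((map_mem_nonunits_iff l ϖ).2 hϖ)
  obtain ⟨ψ, hψC, hψX⟩ := exists_ringHom_mvPowerSeries l (maximalIdeal R) r hr
  let _ : Algebra (MvPowerSeries (Fin n) Λ) R := ψ.toAlgebra
  have finite : Module.Finite (MvPowerSeries (Fin n) Λ) R := by
    refine module_finite_of_maximalIdeal_pow_le (hj.trans (Ideal.span_le.2 ?_))
    rintro _ (rfl | ⟨i, rfl⟩)
    · rw [← hψC]
      refine Ideal.mem_map_of_mem ψ (mt MvPowerSeries.isUnit_iff_constantCoeff.1 ?_)
      rwa [MvPowerSeries.constantCoeff_C]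
    · rw [← hψX]
      refine Ideal.mem_map_of_mem ψ (mt MvPowerSeries.isUnit_iff_constantCoeff.1 ?_)
      rw [MvPowerSeries.constantCoeff_X]
      exact not_isUnit_zero
  refine ⟨Λ, inferInstance, inferInstance, n, ψ, ?_, finite, hdim⟩
  have hdim_eq : ringKrullDim (MvPowerSeries (Fin n) Λ) = ringKrullDim R := by
    rw [ringKrullDim_mvPowerSeries_fin, IsDiscreteValuationRing.ringKrullDim_eq_one, hdim, add_comm]
  have := faithfulSMul_of_isIntegral_of_ringKrullDim_eq hdim_eq
  exact FaithfulSMul.algebraMap_injective _ _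

end NoetherNormalization

section PurelyInseparableExtension

open Polynomial IntermediateField

variable {A R B F : Type*} [CommRing A] [CommRing R] [CommRing B] [IsDomain B] [Field F]

theorem exists_lift_of_isIntegral (Q : Type*) [Field Q] [Algebra B Q] [IsFractionRing B Q]
    [IsIntegrallyClosed B] [Algebra A R] [Algebra.IsIntegral A R] {ρ : A →+* B} {Φ : R →+* Q}
    (h : ∀ x, Φ (algebraMap A R x) = algebraMap B Q (ρ x)) :
    ∃ φ : R →+* B, ∀ r, algebraMap B Q (φ r) = Φ r := by
  have hcomp : (algebraMap B Q).comp ρ = Φ.comp (algebraMap A R) := RingHom.ext fun x => (h x).symm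
  have hmem (r : R) : Φ r ∈ (algebraMap B Q).range := by
    refine IsIntegrallyClosed.isIntegral_iff.1 ?_
    obtain ⟨P, hP, hPr⟩ := Algebra.IsIntegral.isIntegral (R := A) r
    refine ⟨P.map ρ, hP.map _, ?_⟩
    rw [eval₂_map, hcomp, ← hom_eval₂, hPr, map_zero]
  let e := RingEquiv.ofLeftInverse
    (Function.leftInverse_invFun (IsFractionRing.injective B Q))
  refine ⟨(e.symm : _ →+* B).comp (Φ.codRestrict _ hmem), fun r => ?_⟩
  exact congrArg Subtype.val (e.apply_symm_apply ⟨Φ r, hmem r⟩)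

theorem exists_isIntegral_adjoin_eq_top (A K F : Type*) [CommRing A] [IsDomain A] [Field K]
    [Algebra A K] [IsFractionRing A K] [Field F] [Algebra K F] [Algebra A F] [IsScalarTower A K F]
    [FiniteDimensional K F] [Algebra.IsSeparable K F] :
    ∃ θ : F, IsIntegral A θ ∧ K⟮θ⟯ = ⊤ := by
  obtain ⟨θ, hθ⟩ := Field.exists_primitive_element K F
  have hθalg : IsAlgebraic A θ :=
    (IsFractionRing.isAlgebraic_iff A K F).2 (Algebra.IsAlgebraic.isAlgebraic θ)
  obtain ⟨y, hy, hint⟩ := hθalg.exists_integral_multiple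
  refine ⟨y • θ, hint, ?_⟩
  have hyK : algebraMap A K y ≠ 0 := by rwa [Ne, FaithfulSMul.algebraMap_eq_zero_iff]
  rw [eq_top_iff, ← hθ, adjoin_simple_le_iff]
  simpa only [← algebraMap_smul K y θ, inv_smul_smul₀ hyK] using
    K⟮y • θ⟯.smul_mem (x := (algebraMap A K y)⁻¹) (mem_adjoin_simple_self K _)

theorem exists_ringHom_of_isRoot_map_minpoly (K : Type*) [IsDomain A] [IsIntegrallyClosed A]
    [Field K] [Algebra A K] [IsFractionRing A K] [Algebra K F] [Algebra A F] [IsScalarTower A K F]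
    {θ : F} (hθ : IsIntegral A θ) (htop : K⟮θ⟯ = ⊤) {σ : A →+* B} (hσ : Function.Injective σ)
    {β : B} (hβ : ((minpoly A θ).map σ).IsRoot β) :
    ∃ τ : F →+* FractionRing B,
      ∀ x, τ (algebraMap A F x) = algebraMap B (FractionRing B) (σ x) := by
  let σK : K →+* FractionRing B := IsFractionRing.map (K := K) (L := FractionRing B) hσ
  have hmap (x : A) : σK (algebraMap A K x) = algebraMap B (FractionRing B) (σ x) :=
    IsLocalization.map_eq _ x
  let _ : Algebra K (FractionRing B) := σK.toAlgebra
  have hcomp : (algebraMap K (FractionRing B)).comp (algebraMap A K) =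
      (algebraMap B (FractionRing B)).comp σ := RingHom.ext hmap
  have hroot : algebraMap B (FractionRing B) β ∈ (minpoly K θ).aroots (FractionRing B) := by
    rw [mem_aroots]
    refine ⟨minpoly.ne_zero hθ.tower_top, ?_⟩
    rw [minpoly.isIntegrallyClosed_eq_field_fractions' K hθ, aeval_def, eval₂_map, hcomp,
      ← eval₂_map, eval₂_at_apply, hβ.eq_zero, map_zero]
  let τ : F →ₐ[K] FractionRing B :=
    ((algHomAdjoinIntegralEquiv K hθ.tower_top).symm ⟨_, hroot⟩).comp
      ((equivOfEq htop.symm).toAlgHom.comp topEquiv.symm.toAlgHom)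
  refine ⟨τ, fun x => ?_⟩
  rw [IsScalarTower.algebraMap_apply A K F]
  exact (τ.commutes _).trans (hmap x)

theorem exists_injective_pow_of_isPurelyInseparable (F L : Type*) [Field F] [Field L]
    [IsIntegrallyClosed B] [Algebra A R] [Algebra.IsIntegral A R] [Algebra R L] [FaithfulSMul R L]
    [Algebra A F] [Algebra F L] [Algebra A L] [IsScalarTower A R L] [IsScalarTower A F L]
    [IsPurelyInseparable.HasExponent F L] (q : ℕ) [ExpChar A q] [ExpChar F q] {σ : A →+* B}
    {τ : F →+* FractionRing B}
    (hτ : ∀ x, τ (algebraMap A F x) = algebraMap B (FractionRing B) (σ x)) :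
    ∃ φ : R →+* B, Function.Injective φ ∧
      ∀ x, φ (algebraMap A R x) = σ x ^ q ^ IsPurelyInseparable.exponent F L := by
  set N := IsPurelyInseparable.exponent F L
  let frob : L →+* F := IsPurelyInseparable.iterateFrobenius F L q (le_refl N)
  have hfrob (x : L) : algebraMap F L (frob x) = x ^ q ^ N :=
    IsPurelyInseparable.algebraMap_iterateFrobenius F q le_rfl x
  have hfrobA (x : A) : frob (algebraMap R L (algebraMap A R x)) = algebraMap A F x ^ q ^ N := by
    apply (algebraMap F L).injective
    rw [hfrob, map_pow, ← IsScalarTower.algebraMap_apply A R L,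
      IsScalarTower.algebraMap_apply A F L]
  have hB := IsFractionRing.injective B (FractionRing B)
  obtain ⟨φ, hφ⟩ := exists_lift_of_isIntegral (A := A) (R := R) (FractionRing B)
    (ρ := σ.comp (iterateFrobenius A q N)) (Φ := (τ.comp frob).comp (algebraMap R L)) fun x => by
      simp only [RingHom.comp_apply, hfrobA, iterateFrobenius_def, map_pow, hτ]
  refine ⟨φ, fun x y hxy => ?_, fun x => hB ?_⟩
  · apply (τ.comp frob).injective.comp (FaithfulSMul.algebraMap_injective R L)
    exact (hφ x).symm.trans ((congrArg _ hxy).trans (hφ y))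
  · rw [hφ, RingHom.comp_apply, RingHom.comp_apply, hfrobA, map_pow, hτ, map_pow]

theorem exists_separable_forall_isRoot_exists_injective_pow (A R K L : Type*) [CommRing A]
    [IsDomain A] [IsIntegrallyClosed A] [CommRing R] [Algebra A R] [Algebra.IsIntegral A R]
    [Field K] [Algebra A K] [IsFractionRing A K] [Field L] [Algebra R L] [FaithfulSMul R L]
    [Algebra K L] [FiniteDimensional K L] [Algebra A L] [IsScalarTower A R L]
    [IsScalarTower A K L] :
    ∃ (f : A[X]) (M : ℕ), f.Monic ∧ f.natDegree ≠ 0 ∧ (f.map (algebraMap A K)).Separable ∧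
      M ≠ 0 ∧ ∀ (B : Type u) [CommRing B] [IsDomain B] [IsIntegrallyClosed B] (σ : A →+* B),
        Function.Injective σ → (∃ β, (f.map σ).IsRoot β) →
        ∃ φ : R →+* B, Function.Injective φ ∧ ∀ x, φ (algebraMap A R x) = σ x ^ M := by
  let F := separableClosure K L
  have := separableClosure.isPurelyInseparable K L
  obtain ⟨θ, hθ, htop⟩ := exists_isIntegral_adjoin_eq_top A K F
  obtain ⟨q, hq⟩ := ExpChar.exists A
  have : ExpChar K q := expChar_of_injective_algebraMap (FaithfulSMul.algebraMap_injective A K) q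
  have : ExpChar F q := expChar_of_injective_algebraMap (algebraMap K F).injective q
  have : IsScalarTower A F L := .to₁₃₄ A K F L
  refine ⟨minpoly A θ, q ^ IsPurelyInseparable.exponent F L, minpoly.monic hθ,
    (minpoly.natDegree_pos hθ).ne', ?_, pow_ne_zero _ (expChar_pos A q).ne', ?_⟩
  · rw [← minpoly.isIntegrallyClosed_eq_field_fractions' K hθ]
    exact Algebra.IsSeparable.isSeparable K θ
  · rintro B _ _ _ σ hσ ⟨β, hβ⟩
    obtain ⟨τ, hτ⟩ := exists_ringHom_of_isRoot_map_minpoly K hθ htop hσ hβ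
    exact exists_injective_pow_of_isPurelyInseparable F L q hτ

end PurelyInseparableExtension

section Embedding

theorem exists_dvd_algebraMap {A R : Type*} [CommRing A] [Nontrivial A] [CommRing R] [IsDomain R]
    [Algebra A R] [Algebra.IsIntegral A R] {a : R} (ha : a ≠ 0) :
    ∃ d : A, d ≠ 0 ∧ a ∣ algebraMap A R d := by
  obtain ⟨d, hd, hd0⟩ := Submodule.exists_mem_ne_zero_of_ne_bot <|
    Ideal.comap_ne_bot_of_integral_mem (R := A) ha (Ideal.mem_span_singleton_self a)
      (Algebra.IsIntegral.isIntegral a)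
  exact ⟨d, hd0, Ideal.mem_span_singleton.1 hd⟩

theorem map_pow_mul_le_span_singleton {R S : Type*} [CommRing R] [CommRing S] {φ : R →+* S}
    {I J : Ideal R} {q b : S} {j e : ℕ} (hI : I ^ j ≤ J) (hJ : J.map φ ≤ Ideal.span {q})
    (hb : b ∣ q ^ e) : (I ^ (j * e)).map φ ≤ Ideal.span {b} := by
  rw [pow_mul, Ideal.map_pow]
  calc (I ^ j).map φ ^ e
      _ ≤ Ideal.span {q} ^ e := Ideal.pow_right_mono ((Ideal.map_mono hI).trans hJ) e
      _ = Ideal.span {q ^ e} := Ideal.span_singleton_pow q e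
      _ ≤ Ideal.span {b} := Ideal.span_singleton_le_span_singleton.2 hb

attribute [local instance] FractionRing.liftAlgebra

theorem exists_injective_map_maximalIdeal_pow_le (p : ℕ) [Fact p.Prime] {R : Type*} [CommRing R]
    [IsDomain R] [IsNoetherianRing R] [IsLocalRing R] [IsAdicComplete (maximalIdeal R) R]
    [Finite (ResidueField R)] [CharP (ResidueField R) p] (hR : maximalIdeal R ≠ ⊥) {a : R}
    (ha : a ≠ 0) :
    ∃ (O : Type) (_ : CommRing O) (_ : IsLocalFieldIntegerRing O) (n : ℕ)
      (φ : R →+* MvPowerSeries (Fin n) O), Function.Injective φ ∧ ringKrullDim R = n + 1 ∧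
      ∃ k, (maximalIdeal R ^ k).map φ ≤ Ideal.span {φ a} := by
  obtain ⟨Λ, _, _, n, ψ, hψ, hψfin, hdim⟩ := exists_mvPowerSeries_ringHom_finite p hR
  let A := MvPowerSeries (Fin n) Λ
  let _ : Algebra A R := ψ.toAlgebra
  have : Module.Finite A R := hψfin
  have : FaithfulSMul A R := (faithfulSMul_iff_algebraMap_injective A R).2 hψ
  obtain ⟨f, M, hf, hdeg, hsep, hM, hext⟩ := exists_separable_forall_isRoot_exists_injective_pow
    A R (FractionRing A) (FractionRing R)
  obtain ⟨d, hd, had⟩ := exists_dvd_algebraMap (A := A) ha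
  obtain ⟨O, _, _, σ, q, e, hσ, hroot, hqm, hqd⟩ := exists_injective_isRoot_map hf hdeg hsep hd
  obtain ⟨φ, hφ, hφσ⟩ := hext _ σ hσ hroot
  obtain ⟨j, hj⟩ : ∃ j, maximalIdeal R ^ j ≤ (maximalIdeal A).map (algebraMap A R) :=
    finite_quotient_iff.1 (finite_quotient_map_maximalIdeal A R)
  refine ⟨O, inferInstance, inferInstance, n, φ, hφ, hdim, j * (e * M), ?_⟩
  refine map_pow_mul_le_span_singleton hj (q := q) ?_ ?_
  · rw [Ideal.map_map, Ideal.map_le_iff_le_comap]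
    intro x hx
    rw [Ideal.mem_comap, Ideal.mem_span_singleton, RingHom.comp_apply, hφσ]
    exact (hqm x hx).trans (dvd_pow_self _ hM)
  · rw [pow_mul]
    refine (map_dvd φ had).trans ?_
    rw [hφσ]
    exact pow_dvd_pow_of_dvd hqd M

end Embedding

/-- For a commutative Noetherian local pro-`p` domain `R` and `0 ≠ a ∈ R`
there are an integrally closed commutative Noetherian local pro-`p` domain `S` of the same
Krull dimension, an injective ring homomorphism `φ : R → S`, and `k ∈ ℕ` with
`φ((maximalIdeal R)^k) ⊆ φ(a)·S`. -/
theorem exists_embedding_into_integrallyClosed_proP_domain (p : ℕ) [Fact p.Prime]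
    (R : Type) [CommRing R] [IsDomain R] [IsNoetherianRing R] [IsLocalRing R]
    [IsAdicComplete (IsLocalRing.maximalIdeal R) R]
    [Finite (IsLocalRing.ResidueField R)] [CharP (IsLocalRing.ResidueField R) p]
    (a : R) (ha : a ≠ 0) :
    Nonempty (EmbeddingIntoIntegrallyClosedProPDomain p R a) := by
  by_cases hR : maximalIdeal R = ⊥
  · have : IsIntegrallyClosed R :=
      let _ := (isField_iff_maximalIdeal_eq.2 hR).toField
      inferInstance
    exact ⟨{
      S := R
      dim_eq := rfl
      φ := .id R
      injective := Function.injective_id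
      k := 1
      map_pow_le := by simp only [pow_one, hR, Ideal.map_bot, bot_le] }⟩
  · obtain ⟨O, _, _, n, φ, hφ, hdim, k, hk⟩ := exists_injective_map_maximalIdeal_pow_le p hR ha
    have := isLocalHom_of_finite_residueField φ
    exact ⟨{
      S := MvPowerSeries (Fin n) O
      charPResidueField := charP_of_injective_ringHom (ResidueField.map φ).injective p
      dim_eq := by
        rw [ringKrullDim_mvPowerSeries_fin, IsDiscreteValuationRing.ringKrullDim_eq_one, hdim,
          add_comm]
      φ := φ
      injective := hφ
      k := k
      map_pow_le := hk }⟩
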